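/- Let X, Y, Q, A, B ∈ ℂ[t] with deg X = 4, deg Y = 5, deg Q = 2, A constant, deg B ≤ 1, satisfying X^3 + A·X + B = Q·Y^2, and assume 4A^3 + 27B^2 is not the zero polynomial (nondegeneracy of the cubic x^3 + Ax + B). Let X₀(t) = 324t^4 - 360t^3 + 216t^2 - 84t + 15, Y₀(t) = 36(54t^5 - 60t^4 + 45t^3 - 21t^2 + 6t - 1), Q₀(t) = 9t^2 - 10t + 3, B₀(t) = -18(8t - 1). Then there exist λ, u, v ∈ ℂ with λ, u, v ≠ 0 and μ ∈ ℂ such that X(t) = u^2·X₀(λt + μ), A = 33·u^4, B(t) = u^6·B₀(λt + μ), Q(t) = v^2·Q₀(λt + μ), and Y(t) = u^3·v^{-1}·Y₀(λt + μ). That is, up to rescaling t and the polynomials A, B, Q, X, Y, the only nondegenerate solution of X^3 + AX + B = QY^2 with degrees (0,1,2,4,5) is the Elkies solution. -/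

import Mathlib

open Polynomial

/-!
After completing the square and rescaling, `X` and `Y` are monic polynomials `x` and `y` and
`Q = t² - 2q`, with `f = x³ + a x + B = Q y²`. Nondegeneracy forces `a ≠ 0`, so `B = 2aσ`. As `y²`
divides `f` and `y` divides `f'`, eliminating the high powers of `x` from `f` and `f'` produces a
polynomial of degree `7` divisible by `y` and one of degree `11` divisible by `y²`. Their cofactors
`v` and `m` are monic of degrees `2` and `1` up to explicit constants, and two identities between
these polynomials and `f` then eliminate `y` altogether. Each of the resulting equations for
`(x, σ, v, m)` can be written as "quartic times `D` = polynomial of lower degree than expected", so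
the leading coefficients of `D` vanish. This determines most coefficients, and the remaining
comparisons leave a single parameter, which is the scaling of `t` in the Elkies solution.
-/

section Residues

variable {R : Type*} [CommRing R]

/-- Up to the factor `4a²`, the residue of `(3x² + 4a) f'²` modulo `f = x³ + a (x + 2 σ)`, where
`f' = (3x² + a) x' + 2 a σ'`. -/
def quadraticResidue (a σ σ' x x' : R) : R :=
  (a + 27 * σ ^ 2) * x' ^ 2 + 2 * σ' * (3 * x ^ 2 - 9 * σ * x + 2 * a) * x'
    + σ' ^ 2 * (3 * x ^ 2 + 4 * a)

/-- Up to the factor `2a`, the residue of `-x f'` modulo `f = x³ + a (x + 2 σ)`, where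
`f' = (3x² + a) x' + 2 a σ'`. -/
def linearResidue (σ σ' x x' : R) : R :=
  (x + 3 * σ) * x' - σ' * x

variable {a σ σ' x x' y : R}

theorem dvd_mul_linearResidue (hf : y ∣ x ^ 3 + a * (x + 2 * σ))
    (hf' : y ∣ (3 * x ^ 2 + a) * x' + 2 * a * σ') :
    y ∣ 2 * a * linearResidue σ σ' x x' := by
  convert (hf.mul_left (3 * x')).sub (hf'.mul_left x) using 1
  rw [linearResidue]
  ring

theorem sq_dvd_mul_quadraticResidue (hf : y ^ 2 ∣ x ^ 3 + a * (x + 2 * σ))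
    (hf' : y ∣ (3 * x ^ 2 + a) * x' + 2 * a * σ') :
    y ^ 2 ∣ 4 * a ^ 2 * quadraticResidue a σ σ' x x' := by
  convert ((pow_dvd_pow_of_dvd hf' 2).mul_left (3 * x ^ 2 + 4 * a)).sub
    (hf.mul_left ((27 * x ^ 3 + 27 * a * x - 54 * a * σ) * x' ^ 2 + 36 * a * σ' * x * x')) using 1
  rw [quadraticResidue]
  ring

variable (a σ σ' x x')

theorem linearResidue_sq_mul_add_quadraticResidue_mul :
    linearResidue σ σ' x x' ^ 2 * (x - 6 * σ) + quadraticResidue a σ σ' x x' * (x + 2 * σ) =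
      (x' + 2 * σ') ^ 2 * (x ^ 3 + a * (x + 2 * σ)) := by
  rw [linearResidue, quadraticResidue]
  ring

theorem mul_linearResidue_sq_sub_quadraticResidue_mul :
    (a + 27 * σ ^ 2) * linearResidue σ σ' x x' ^ 2
        - quadraticResidue a σ σ' x x' * (x + 3 * σ) ^ 2 =
      -3 * σ' * (2 * (x + 3 * σ) * x' + σ' * (x + 6 * σ)) * (x ^ 3 + a * (x + 2 * σ)) := by
  rw [linearResidue, quadraticResidue]
  ring

end Residues

/-! ### Polynomials with prescribed leading term -/

section CommRing

variable {R : Type*} [CommRing R]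

theorem isMonicOfDegree_X_sq_sub [Nontrivial R] (q : R) :
    IsMonicOfDegree (X ^ 2 - 2 * C q) 2 :=
  (isMonicOfDegree_X_pow (R := R) 2).sub (by compute_degree!)

theorem exists_eq_quartic_of_isMonicOfDegree {p : R[X]} (hp : IsMonicOfDegree p 4) :
    ∃ c₃ c₂ c₁ c₀ : R, p = X ^ 4 + C c₃ * X ^ 3 + C c₂ * X ^ 2 + C c₁ * X + C c₀ := by
  refine ⟨p.coeff 3, p.coeff 2, p.coeff 1, p.coeff 0, ?_⟩
  conv_lhs => rw [hp.monic.as_sum, hp.natDegree_eq]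
  simp only [Finset.sum_range_succ, Finset.sum_range_zero, pow_zero, pow_one, mul_one, zero_add]
  abel

theorem natDegree_le_of_isMonicOfDegree_mul {p r : R[X]} {n k : ℕ} (hp : IsMonicOfDegree p n)
    (h : (p * r).natDegree ≤ n + k) : r.natDegree ≤ k := by
  rcases eq_or_ne r 0 with rfl | hr
  · exact natDegree_zero.trans_le k.zero_le
  · rw [hp.monic.natDegree_mul' hr, hp.natDegree_eq] at h
    exact Nat.le_of_add_le_add_left h

theorem taylor_comp_linear (p : R[X]) (l μ r : R) :
    taylor r (p.comp (C l * X + C μ)) = p.comp (C l * X + C (l * r + μ)) := by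
  rw [taylor_apply, comp_assoc, add_comp, C_mul_comp, X_comp, C_comp, C_add, C_mul, mul_add,
    add_assoc]

theorem natDegree_quadraticResidue_le {a k : R} {x σ : R[X]} (hx : x.natDegree ≤ 4)
    (hσ : σ.natDegree ≤ 1) :
    (quadraticResidue (C a) σ (C k) x (derivative x)).natDegree ≤ 11 := by
  have := natDegree_derivative_le x
  rw [quadraticResidue]
  compute_degree
  omega

theorem coeff_quadraticResidue [Nontrivial R] {a k : R} {x σ : R[X]} (hx : IsMonicOfDegree x 4)
    (hσ : σ.natDegree ≤ 1) :
    (quadraticResidue (C a) σ (C k) x (derivative x)).coeff 11 = 24 * k := by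
  have hx₄ : x.coeff 4 = 1 := ((isMonicOfDegree_iff ..).mp hx).2
  have hxdeg := hx.natDegree_eq
  have hx'deg := natDegree_derivative_le x
  have hlead : (x ^ 2 * derivative x).coeff 11 = 4 := by
    rw [coeff_mul_add_eq_of_natDegree_le (df := 8) (dg := 3) (by compute_degree; omega) (by omega),
      ((isMonicOfDegree_iff ..).mp (hx.pow 2)).2, coeff_derivative, hx₄]
    norm_num
  have hsplit : quadraticResidue (C a) σ (C k) x (derivative x) =
      C (6 * k) * (x ^ 2 * derivative x) + ((C a + 27 * σ ^ 2) * derivative x ^ 2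
        + C k * (4 * C a - 18 * σ * x) * derivative x + C k ^ 2 * (3 * x ^ 2 + 4 * C a)) := by
    rw [quadraticResidue, C_mul, C_ofNat]
    ring
  rw [hsplit, coeff_add, coeff_C_mul, hlead, coeff_eq_zero_of_natDegree_lt]
  · ring
  · rw [Nat.lt_succ_iff]
    compute_degree
    omega

end CommRing

variable {K : Type*} [Field K]

theorem exists_isMonicOfDegree_eq_C_mul_mul {p y : K[X]} {m n : ℕ} {c : K}
    (hy : IsMonicOfDegree y m) (hdvd : y ∣ p) (hp : p.natDegree ≤ m + n)
    (hpc : p.coeff (m + n) = c) (hc : c ≠ 0) :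
    ∃ v : K[X], IsMonicOfDegree v n ∧ p = C c * (y * v) := by
  obtain ⟨w, hw⟩ := hdvd.mul_left (C c⁻¹)
  have hmonic : IsMonicOfDegree (C c⁻¹ * p) (m + n) := by
    rw [isMonicOfDegree_iff, natDegree_C_mul (inv_ne_zero hc), coeff_C_mul, hpc]
    exact ⟨hp, inv_mul_cancel₀ hc⟩
  refine ⟨w, hy.of_mul_left (hw ▸ hmonic), ?_⟩
  rw [← hw, ← mul_assoc, ← C_mul, mul_inv_cancel₀ hc, C_1, one_mul]

theorem eq_and_eq_of_C_mul_eq_C_mul {a b : K} {p r : K[X]} {n : ℕ} (ha : a ≠ 0)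
    (hp : IsMonicOfDegree p n) (hr : IsMonicOfDegree r n) (h : C a * p = C b * r) :
    a = b ∧ p = r := by
  have hab : a = b := by
    simpa [hp.leadingCoeff_eq, hr.leadingCoeff_eq] using congrArg leadingCoeff h
  exact ⟨hab, mul_left_cancel₀ (C_ne_zero.mpr ha) (hab ▸ h)⟩

theorem exists_eq_C_mul_taylor {c : K} (hc : c ≠ 0) (r : K) (p : K[X]) :
    ∃ x : K[X], p = C c * taylor r x := by
  refine ⟨taylor (-r) (C c⁻¹ * p), ?_⟩
  rw [taylor_taylor, add_neg_cancel, taylor_zero, ← mul_assoc, ← C_mul, mul_inv_cancel₀ hc, C_1,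
    one_mul]

theorem exists_isMonicOfDegree_eq_C_mul_taylor {p : K[X]} {n : ℕ} (hp : p.degree = n) (r : K) :
    ∃ c ≠ 0, ∃ x : K[X], IsMonicOfDegree x n ∧ p = C c * taylor r x := by
  have hlead : p.leadingCoeff ≠ 0 := leadingCoeff_ne_zero.mpr (ne_zero_of_coe_le_degree hp.ge)
  obtain ⟨x, hx⟩ := exists_eq_C_mul_taylor hlead r p
  refine ⟨p.leadingCoeff, hlead, x, ⟨?_, ?_⟩, hx⟩
  · rw [← natDegree_eq_of_degree_eq_some hp, congrArg natDegree hx, natDegree_C_mul hlead,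
      natDegree_taylor]
  · have hmul := congrArg leadingCoeff hx
    rw [leadingCoeff_mul, leadingCoeff_C, leadingCoeff_taylor] at hmul
    exact (mul_eq_left₀ hlead).mp hmul.symm

theorem exists_eq_C_mul_taylor_sq_sub [NeZero (2 : K)] {p : K[X]} (hp : p.degree = 2) :
    ∃ c ≠ 0, ∃ r q : K, p = C c * taylor r (X ^ 2 - 2 * C q) := by
  obtain ⟨c, hc, x, hx, rfl⟩ := exists_isMonicOfDegree_eq_C_mul_taylor (n := 2) hp 0
  obtain ⟨b, d, rfl⟩ := isMonicOfDegree_two_iff.mp hx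
  obtain ⟨s, rfl⟩ : ∃ s, b = 2 * s := ⟨b / 2, (mul_div_cancel₀ b two_ne_zero).symm⟩
  obtain ⟨q, rfl⟩ : ∃ q, d = s ^ 2 - 2 * q :=
    ⟨(s ^ 2 - d) / 2, by rw [mul_div_cancel₀ _ two_ne_zero, sub_sub_cancel]⟩
  refine ⟨c, hc, s, q, ?_⟩
  rw [taylor_zero, map_sub (taylor s), taylor_X_pow, ← C_ofNat, ← C_mul, taylor_C]
  simp only [C_mul, C_sub, C_pow, C_ofNat]
  ring

/-! ### Solutions -/

/-- The polynomial `X` of the Elkies solution. -/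
noncomputable def elkiesX (R : Type*) [CommRing R] : R[X] :=
  324 * X ^ 4 - 360 * X ^ 3 + 216 * X ^ 2 - 84 * X + 15

/-- The polynomial `B` of the Elkies solution; the polynomial `A` is the constant `33`. -/
noncomputable def elkiesB (R : Type*) [CommRing R] : R[X] :=
  -18 * (8 * X - 1)

/-- The polynomial `Q` of the Elkies solution. -/
noncomputable def elkiesQ (R : Type*) [CommRing R] : R[X] :=
  9 * X ^ 2 - 10 * X + 3

/-- The polynomial `Y` of the Elkies solution. -/
noncomputable def elkiesY (R : Type*) [CommRing R] : R[X] :=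
  36 * (54 * X ^ 5 - 60 * X ^ 4 + 45 * X ^ 3 - 21 * X ^ 2 + 6 * X - 1)

/-- A nondegenerate solution of the Elkies–Pell–Zagier equation with `(A, B, Q, X, Y)` of degrees
`(0, 1, 2, 4, 5)`; `A` may vanish and `B` may be constant. -/
structure ElkiesPellZagierSolution (Xp Yp Qp A B : K[X]) : Prop where
  degree_X : Xp.degree = 4
  degree_Y : Yp.degree = 5
  degree_Q : Qp.degree = 2
  degree_A : A.degree ≤ 0
  degree_B : B.degree ≤ 1
  equation : Xp ^ 3 + A * Xp + B = Qp * Yp ^ 2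
  nondegenerate : 4 * A ^ 3 + 27 * B ^ 2 ≠ 0

/-- An Elkies–Pell–Zagier solution scaled to have `X`, `Y` and `Q` monic and translated to have
`Q = t² - 2q`; the factor `2` avoids fractions later on. -/
structure NormalizedSolution (x y B : K[X]) (a q : K) : Prop where
  monic_x : IsMonicOfDegree x 4
  monic_y : IsMonicOfDegree y 5
  natDegree_B : B.natDegree ≤ 1
  equation : x ^ 3 + C a * x + B = (X ^ 2 - 2 * C q) * y ^ 2
  nondegenerate : 4 * C a ^ 3 + 27 * B ^ 2 ≠ 0

/-- What remains of a normalized solution with `B = 2aσ` once `y` is eliminated. Here `4v` and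
`24σ'm` are the cofactors of `y` in the linear residue and of `y²` in the quadratic residue, and the
two relations are `linearResidue_sq_mul_add_quadraticResidue_mul` and
`mul_linearResidue_sq_sub_quadraticResidue_mul` divided by `y²`. -/
structure ReducedSolution (x σ v m : K[X]) (a q : K) : Prop where
  monic_x : IsMonicOfDegree x 4
  natDegree_σ : σ.natDegree = 1
  monic_v : IsMonicOfDegree v 2
  monic_m : IsMonicOfDegree m 1
  cubic_relation : 16 * v ^ 2 * (x - 6 * σ) + 24 * derivative σ * m * (x + 2 * σ) =
    (X ^ 2 - 2 * C q) * (derivative x + 2 * derivative σ) ^ 2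
  discr_relation : 16 * (C a + 27 * σ ^ 2) * v ^ 2
      + 3 * derivative σ * (X ^ 2 - 2 * C q)
        * (2 * (x + 3 * σ) * derivative x + derivative σ * (x + 6 * σ)) =
    24 * derivative σ * m * (x + 3 * σ) ^ 2

/-- The polynomial `D` for which `discr_relation` becomes `(x + 3σ) D = (terms of degree 6)`. It has
degree at most `2`, although it is formed from quintics. -/
noncomputable def discrDefect (x σ m : K[X]) (q : K) : K[X] :=
  4 * m * (x + 3 * σ) - (X ^ 2 - 2 * C q) * derivative x

/-- The polynomial `D` for which `cubic_relation` becomes `x D = (terms of degree 5)`. It has degree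
at most `1`, although it is formed from quartics. -/
noncomputable def cubicDefect (x v m : K[X]) : K[X] :=
  16 * v ^ 2 - 4 * m * derivative x

theorem discrDefect_eq (x₃ x₂ x₁ x₀ k e l q : K) :
    discrDefect (X ^ 4 + C x₃ * X ^ 3 + C x₂ * X ^ 2 + C x₁ * X + C x₀) (C k * X + C e)
        (X + C l) q =
      C (x₃ + 4 * l) * X ^ 4 + C (2 * x₂ + 4 * l * x₃ + 8 * q) * X ^ 3
        + C (3 * x₁ + 12 * k + 4 * l * x₂ + 6 * q * x₃) * X ^ 2
        + C (4 * x₀ + 12 * e + 4 * l * (x₁ + 3 * k) + 4 * q * x₂) * X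
        + C (4 * l * (x₀ + 3 * e) + 2 * q * x₁) := by
  simp only [discrDefect, derivative_C_mul, derivative_X_pow, derivative_C,
    derivative_X, Nat.cast_ofNat, map_add, map_mul, C_ofNat]
  ring

theorem cubicDefect_eq (x₃ x₂ x₁ x₀ v₁ v₀ l : K) :
    cubicDefect (X ^ 4 + C x₃ * X ^ 3 + C x₂ * X ^ 2 + C x₁ * X + C x₀)
        (X ^ 2 + C v₁ * X + C v₀) (X + C l) =
      C (32 * v₁ - 12 * x₃ - 16 * l) * X ^ 3
        + C (16 * v₁ ^ 2 + 32 * v₀ - 8 * x₂ - 12 * l * x₃) * X ^ 2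
        + C (32 * v₁ * v₀ - 4 * x₁ - 8 * l * x₂) * X + C (16 * v₀ ^ 2 - 4 * l * x₁) := by
  simp only [cubicDefect, derivative_C_mul, derivative_X_pow, derivative_C,
    derivative_X, Nat.cast_ofNat, map_add, map_sub, map_mul, map_pow, C_ofNat]
  ring

section CoefficientComparison

variable {R : Type*} [CommRing R]

theorem coeff_relations_of_mul_quadratic_eq {x₃ x₂ x₁ x₀ k e d₂ d₁ d₀ v₁ v₀ a q : R}
    (h : (X ^ 4 + C x₃ * X ^ 3 + C x₂ * X ^ 2 + C x₁ * X + C x₀ + 3 * (C k * X + C e))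
          * (6 * C k * (C d₂ * X ^ 2 + C d₁ * X + C d₀)) =
      16 * (C a + 27 * (C k * X + C e) ^ 2) * (X ^ 2 + C v₁ * X + C v₀) ^ 2
        + 3 * C k ^ 2 * (X ^ 2 - 2 * C q)
          * (X ^ 4 + C x₃ * X ^ 3 + C x₂ * X ^ 2 + C x₁ * X + C x₀ + 6 * (C k * X + C e))) :
    6 * k * d₂ = 435 * k ^ 2 ∧
    6 * k * (d₁ + x₃ * d₂) = 3 * k ^ 2 * x₃ + 864 * k * (e + k * v₁) ∧
    6 * k * (d₀ + x₃ * d₁ + x₂ * d₂) =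
      3 * k ^ 2 * (x₂ - 2 * q) + 16 * a + 432 * (e + k * v₁) ^ 2
        + 864 * k * (v₁ * e + k * v₀) := by
  have h₆ := congrArg (coeff · 6) h
  have h₅ := congrArg (coeff · 5) h
  have h₄ := congrArg (coeff · 4) h
  ring_nf at h₆ h₅ h₄
  simp only [X_mul_C, ← C_pow, X_pow_mul_C, X_pow_mul_assoc_C, coeff_add, coeff_mul_ofNat,
    coeff_mul_C, coeff_C_mul, coeff_X, OfNat.one_ne_ofNat, ↓reduceIte, mul_zero, zero_mul, add_zero,
    coeff_mul_X_pow', Nat.reduceLeDiff, Nat.reduceSub, coeff_C_succ, Std.le_refl, tsub_self,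
    mul_coeff_zero, coeff_C, zero_add, OfNat.ofNat_ne_zero, coeff_sub, coeff_neg, neg_zero,
    sub_self, sub_zero] at h₆ h₅ h₄
  refine ⟨?_, ?_, ?_⟩
  · linear_combination h₆
  · linear_combination h₅
  · linear_combination h₄

theorem coeff_relations_of_mul_linear_eq {x₃ x₂ x₁ x₀ k e d₂ d₁ d₀ e₁ e₀ l v₁ v₀ q : R}
    (h : (X ^ 4 + C x₃ * X ^ 3 + C x₂ * X ^ 2 + C x₁ * X + C x₀) * (C e₁ * X + C e₀) =
      96 * (C k * X + C e) * (X ^ 2 + C v₁ * X + C v₀) ^ 2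
        - 24 * C k * (X + C l)
          * (X ^ 4 + C x₃ * X ^ 3 + C x₂ * X ^ 2 + C x₁ * X + C x₀ + 2 * (C k * X + C e))
        + (4 * X ^ 3 + 3 * C x₃ * X ^ 2 + 2 * C x₂ * X + C x₁)
          * (12 * (X + C l) * (C k * X + C e) - (C d₂ * X ^ 2 + C d₁ * X + C d₀)
            + 4 * C k * (X ^ 2 - 2 * C q))
        + 4 * C k ^ 2 * (X ^ 2 - 2 * C q)) :
    e₁ = 136 * k - 4 * d₂ ∧
    e₀ + x₃ * e₁ = 24 * k * (x₃ + 8 * v₁ + l) + 144 * e - 3 * x₃ * d₂ - 4 * d₁ ∧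
    x₃ * e₀ + x₂ * e₁ =
      8 * k * x₂ + 12 * k * l * x₃ + 96 * k * v₁ ^ 2 + 192 * (k * v₀ + e * v₁) + 36 * e * x₃
        + 48 * e * l - 32 * k * q - 2 * x₂ * d₂ - 3 * x₃ * d₁ - 4 * d₀ := by
  have h₅ := congrArg (coeff · 5) h
  have h₄ := congrArg (coeff · 4) h
  have h₃ := congrArg (coeff · 3) h
  ring_nf at h₅ h₄ h₃
  simp only [X_mul_C, ← C_pow, X_pow_mul_C, X_pow_mul_assoc_C, coeff_add, coeff_mul_ofNat,
    coeff_mul_C, coeff_C_mul, coeff_X, OfNat.one_ne_ofNat, ↓reduceIte, mul_zero, zero_mul, add_zero,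
    coeff_mul_X_pow', Nat.reduceLeDiff, Nat.reduceSub, coeff_C_succ, Std.le_refl, tsub_self,
    mul_coeff_zero, coeff_C, zero_add, OfNat.ofNat_ne_zero, coeff_sub, coeff_neg, neg_zero,
    sub_self, sub_zero] at h₅ h₄ h₃
  refine ⟨?_, ?_, ?_⟩
  · linear_combination h₅
  · linear_combination h₄
  · linear_combination h₃

end CoefficientComparison

theorem exists_parameter_of_coeff_relations [CharZero K] {l k e x₁ x₀ a q : K} (hk : k ≠ 0)
    (hdiscr₆ : 6 * x₁ = 121 * k + 80 * l * q - 64 * l ^ 3)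
    (hcubic₅ : 4 * x₁ = 154 * k + 64 * l * q - 64 * l ^ 3)
    (hdiscr₅ : 4 * x₀ = 132 * e + 132 * k * l - 4 * l * x₁ - 32 * l ^ 2 * q + 16 * q ^ 2)
    (hcubic₄ : 432 * e = 4 * l * x₁ - 16 * q ^ 2 - 586 * k * l)
    (hcubic₃ : 16 * l * x₀ = 1392 * e * l + 1912 * k * l ^ 2 - 292 * k * q - 16 * l ^ 2 * x₁
      - 8 * q * x₁ + 64 * l * q ^ 2)
    (hdiscr₄ : 16 * a = 24 * k * l * x₀ + 12 * k * q * x₁ - 1656 * k * l * e - 432 * k ^ 2 * l ^ 2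
      - 858 * k ^ 2 * q - 432 * e ^ 2) :
    ∃ n : K, n ≠ 0 ∧ l = 5 * n ∧ q = -4 * n ^ 2 ∧ k = 432 / 11 * n ^ 3 ∧
      e = -3348 / 11 * n ^ 4 ∧ x₁ = -808 * n ^ 3 ∧ x₀ = 1340 * n ^ 4 ∧ a = 3464208 * n ^ 8 := by
  have hkl : k = 8 / 55 * (l * (2 * l ^ 2 - q)) := by
    linear_combination (hdiscr₆ - 3 / 2 * hcubic₅) / 110
  have hls : l * (2 * l ^ 2 - q) ≠ 0 := fun hls => hk (by rw [hkl, hls, mul_zero])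
  have hx₁ : x₁ = 52 / 5 * l * q - 24 / 5 * l ^ 3 := by
    linear_combination hcubic₅ / 4 + 77 / 2 * hkl
  have hq : q = -(4 / 25) * l ^ 2 := by
    have hlinear : 2 * (l ^ 2 - q) * x₁ + (53 * l ^ 2 - 73 * q) * k =
        8 * l * q ^ 2 - 32 * l ^ 3 * q := by
      linear_combination (4 * l * hdiscr₅ - hcubic₃ - 2 * l * hcubic₄) / 4
    have hprod : l * (2 * l ^ 2 - q) * (25 * q + 4 * l ^ 2) = 0 := by
      rw [hkl, hx₁] at hlinear
      linear_combination 11 / 8 * hlinear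
    linear_combination (mul_eq_zero.mp hprod).resolve_left hls / 25
  obtain ⟨n, rfl⟩ : ∃ n, l = 5 * n := ⟨l / 5, by ring⟩
  obtain rfl : q = -4 * n ^ 2 := by linear_combination hq
  obtain rfl : k = 432 / 11 * n ^ 3 := by linear_combination hkl
  obtain rfl : x₁ = -808 * n ^ 3 := by linear_combination hx₁
  obtain rfl : e = -3348 / 11 * n ^ 4 := by linear_combination hcubic₄ / 432
  obtain rfl : x₀ = 1340 * n ^ 4 := by linear_combination hdiscr₅ / 4
  refine ⟨n, right_ne_zero_of_mul (left_ne_zero_of_mul hls), rfl, rfl, rfl, rfl, rfl, rfl, ?_⟩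
  linear_combination hdiscr₄ / 16

namespace ReducedSolution

variable {x σ v m : K[X]} {a q : K}

theorem mul_discrDefect (h : ReducedSolution x σ v m a q) :
    (x + 3 * σ) * (6 * derivative σ * discrDefect x σ m q) =
      16 * (C a + 27 * σ ^ 2) * v ^ 2
        + 3 * derivative σ ^ 2 * (X ^ 2 - 2 * C q) * (x + 6 * σ) := by
  rw [discrDefect]
  linear_combination -h.discr_relation

theorem mul_cubicDefect (h : ReducedSolution x σ v m a q) :
    x * cubicDefect x v m =
      96 * σ * v ^ 2 - 24 * derivative σ * m * (x + 2 * σ)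
        + derivative x * (12 * m * σ - discrDefect x σ m q
          + 4 * derivative σ * (X ^ 2 - 2 * C q))
        + 4 * derivative σ ^ 2 * (X ^ 2 - 2 * C q) := by
  rw [discrDefect, cubicDefect]
  linear_combination h.cubic_relation

theorem natDegree_discrDefect_le [CharZero K] (h : ReducedSolution x σ v m a q) :
    (discrDefect x σ m q).natDegree ≤ 2 := by
  have hx := h.monic_x.natDegree_eq
  have hσ := h.natDegree_σ
  have hv := h.monic_v.natDegree_eq
  have hmonic : IsMonicOfDegree (x + 3 * σ) 4 := h.monic_x.add_right (by compute_degree; omega)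
  have hdeg : (6 * derivative σ * discrDefect x σ m q).natDegree ≤ 2 := by
    have := natDegree_derivative_le σ
    refine natDegree_le_of_isMonicOfDegree_mul hmonic ?_
    rw [h.mul_discrDefect]
    compute_degree
    omega
  obtain ⟨k, hk, e, rfl⟩ := natDegree_eq_one.mp hσ
  have hderiv : 6 * derivative (C k * X + C e) = C (6 * k) := by
    rw [C_mul, C_ofNat]
    simp
  rwa [hderiv, natDegree_C_mul (mul_ne_zero (by norm_num) hk)] at hdeg

theorem natDegree_cubicDefect_le [CharZero K] (h : ReducedSolution x σ v m a q) :
    (cubicDefect x v m).natDegree ≤ 1 := by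
  have := h.monic_x.natDegree_eq
  have := h.natDegree_σ
  have := h.monic_v.natDegree_eq
  have := h.monic_m.natDegree_eq
  have := natDegree_derivative_le σ
  have := natDegree_derivative_le x
  have := h.natDegree_discrDefect_le
  refine natDegree_le_of_isMonicOfDegree_mul h.monic_x ?_
  rw [h.mul_cubicDefect]
  compute_degree
  omega

variable [CharZero K]

theorem exists_coeffs (h : ReducedSolution x σ v m a q) :
    ∃ l k e x₁ x₀ : K, k ≠ 0 ∧ m = X + C l ∧ σ = C k * X + C e ∧ v = X ^ 2 + C (-l) * X + C (-q) ∧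
      x = X ^ 4 + C (-(4 * l)) * X ^ 3 + C (8 * l ^ 2 - 4 * q) * X ^ 2 + C x₁ * X + C x₀ := by
  obtain ⟨k, hk, e, rfl⟩ := natDegree_eq_one.mp h.natDegree_σ
  obtain ⟨l, rfl⟩ := isMonicOfDegree_one_iff.mp h.monic_m
  obtain ⟨v₁, v₀, rfl⟩ := isMonicOfDegree_two_iff.mp h.monic_v
  obtain ⟨x₃, x₂, x₁, x₀, rfl⟩ := exists_eq_quartic_of_isMonicOfDegree h.monic_x
  have hD₄ : x₃ + 4 * l = 0 := by
    simpa [coeff_X, coeff_C, discrDefect_eq, -map_mul, -map_add] using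
      coeff_eq_zero_of_natDegree_lt (h.natDegree_discrDefect_le.trans_lt (by norm_num : 2 < 4))
  have hD₃ : 2 * x₂ + 4 * l * x₃ + 8 * q = 0 := by
    simpa [coeff_X, coeff_C, discrDefect_eq, -map_mul, -map_add] using
      coeff_eq_zero_of_natDegree_lt (h.natDegree_discrDefect_le.trans_lt (by norm_num : 2 < 3))
  have hE₃ : 32 * v₁ - 12 * x₃ - 16 * l = 0 := by
    simpa [coeff_X, coeff_C, cubicDefect_eq, -map_mul, -map_add, -map_sub] using
      coeff_eq_zero_of_natDegree_lt (h.natDegree_cubicDefect_le.trans_lt (by norm_num : 1 < 3))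
  have hE₂ : 16 * v₁ ^ 2 + 32 * v₀ - 8 * x₂ - 12 * l * x₃ = 0 := by
    simpa [coeff_X, coeff_C, cubicDefect_eq, -map_mul, -map_add, -map_sub] using
      coeff_eq_zero_of_natDegree_lt (h.natDegree_cubicDefect_le.trans_lt (by norm_num : 1 < 2))
  obtain rfl : x₃ = -(4 * l) := by linear_combination hD₄
  obtain rfl : x₂ = 8 * l ^ 2 - 4 * q := by linear_combination hD₃ / 2
  obtain rfl : v₁ = -l := by linear_combination hE₃ / 32
  obtain rfl : v₀ = -q := by linear_combination hE₂ / 32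
  exact ⟨l, k, e, x₁, x₀, hk, rfl, rfl, rfl, rfl⟩

theorem coeff_relations {l k e x₁ x₀ : K} (hk : k ≠ 0)
    (h : ReducedSolution
      (X ^ 4 + C (-(4 * l)) * X ^ 3 + C (8 * l ^ 2 - 4 * q) * X ^ 2 + C x₁ * X + C x₀)
      (C k * X + C e) (X ^ 2 + C (-l) * X + C (-q)) (X + C l) a q) :
    6 * x₁ = 121 * k + 80 * l * q - 64 * l ^ 3 ∧
    4 * x₁ = 154 * k + 64 * l * q - 64 * l ^ 3 ∧
    4 * x₀ = 132 * e + 132 * k * l - 4 * l * x₁ - 32 * l ^ 2 * q + 16 * q ^ 2 ∧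
    432 * e = 4 * l * x₁ - 16 * q ^ 2 - 586 * k * l ∧
    16 * l * x₀ = 1392 * e * l + 1912 * k * l ^ 2 - 292 * k * q - 16 * l ^ 2 * x₁
      - 8 * q * x₁ + 64 * l * q ^ 2 ∧
    16 * a = 24 * k * l * x₀ + 12 * k * q * x₁ - 1656 * k * l * e - 432 * k ^ 2 * l ^ 2
      - 858 * k ^ 2 * q - 432 * e ^ 2 := by
  have hdiscr := h.mul_discrDefect
  have hcubic := h.mul_cubicDefect
  have hσ : derivative (C k * X + C e) = C k := by simp
  have hx : derivative (X ^ 4 + C (-(4 * l)) * X ^ 3 + C (8 * l ^ 2 - 4 * q) * X ^ 2 + C x₁ * X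
      + C x₀) = 4 * X ^ 3 + 3 * C (-(4 * l)) * X ^ 2 + 2 * C (8 * l ^ 2 - 4 * q) * X + C x₁ := by
    simp only [derivative_add, derivative_C_mul, derivative_X_pow, derivative_C,
      derivative_X, Nat.cast_ofNat, C_ofNat]
    ring
  have hD₄ : -(4 * l) + 4 * l = 0 := by ring
  have hD₃ : 2 * (8 * l ^ 2 - 4 * q) + 4 * l * -(4 * l) + 8 * q = 0 := by ring
  have hE₃ : 32 * -l - 12 * -(4 * l) - 16 * l = 0 := by ring
  have hE₂ : 16 * (-l) ^ 2 + 32 * -q - 8 * (8 * l ^ 2 - 4 * q) - 12 * l * -(4 * l) = 0 := by ring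
  rw [discrDefect_eq, hD₄, hD₃, C_0, zero_mul, zero_mul, zero_add, zero_add, hσ] at hdiscr hcubic
  rw [cubicDefect_eq, hE₃, hE₂, C_0, zero_mul, zero_mul, zero_add, zero_add, hx] at hcubic
  obtain ⟨hdiscr₆, hdiscr₅, hdiscr₄⟩ := coeff_relations_of_mul_quadratic_eq hdiscr
  obtain ⟨hcubic₅, hcubic₄, hcubic₃⟩ := coeff_relations_of_mul_linear_eq hcubic
  have hd₂ : 2 * (3 * x₁ + 12 * k + 4 * l * (8 * l ^ 2 - 4 * q) + 6 * q * -(4 * l)) = 145 * k :=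
    mul_left_cancel₀ (mul_ne_zero three_ne_zero hk) (by linear_combination hdiscr₆)
  have hd₁ : 4 * x₀ + 12 * e + 4 * l * (x₁ + 3 * k) + 4 * q * (8 * l ^ 2 - 4 * q) =
      144 * (e + k * l) :=
    mul_left_cancel₀ (mul_ne_zero (by norm_num : (6 : K) ≠ 0) hk)
      (by linear_combination hdiscr₅ + 12 * k * l * hd₂)
  have he₁ : 32 * -l * -q - 4 * x₁ - 8 * l * (8 * l ^ 2 - 4 * q) = -154 * k := by
    linear_combination hcubic₅ - 2 * hd₂
  refine ⟨?_, ?_, ?_, ?_, ?_, ?_⟩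
  · linear_combination hd₂
  · linear_combination -he₁
  · linear_combination hd₁
  · linear_combination hcubic₄ + 4 * l * he₁ + 6 * l * hd₂ - 4 * hd₁
  · linear_combination hcubic₃ - (8 * l ^ 2 - 4 * q) * (he₁ + hd₂) + 12 * l * hd₁
  · linear_combination -hdiscr₄ - 24 * k * l * hd₁ + 3 * k * (8 * l ^ 2 - 4 * q) * hd₂

theorem exists_parameter (h : ReducedSolution x σ v m a q) :
    ∃ n : K, n ≠ 0 ∧ q = -4 * n ^ 2 ∧ a = 3464208 * n ^ 8 ∧
      σ = C (432 / 11 * n ^ 3) * X + C (-3348 / 11 * n ^ 4) ∧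
      x = X ^ 4 + C (-20 * n) * X ^ 3 + C (216 * n ^ 2) * X ^ 2 + C (-808 * n ^ 3) * X
        + C (1340 * n ^ 4) := by
  obtain ⟨l, k, e, x₁, x₀, hk, rfl, rfl, rfl, rfl⟩ := h.exists_coeffs
  obtain ⟨hdiscr₆, hcubic₅, hdiscr₅, hcubic₄, hcubic₃, hdiscr₄⟩ := h.coeff_relations hk
  obtain ⟨n, hn, rfl, rfl, rfl, rfl, rfl, rfl, rfl⟩ :=
    exists_parameter_of_coeff_relations hk hdiscr₆ hcubic₅ hdiscr₅ hcubic₄ hcubic₃ hdiscr₄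
  have hx₃ : -(4 * (5 * n)) = -20 * n := by ring
  have hx₂ : 8 * (5 * n) ^ 2 - 4 * (-4 * n ^ 2) = 216 * n ^ 2 := by ring
  exact ⟨n, hn, rfl, rfl, rfl, by rw [hx₃, hx₂]⟩

end ReducedSolution

/-! ### Elimination of `y` -/

namespace NormalizedSolution

variable {x y B : K[X]} {a q : K}

theorem sq_dvd (h : NormalizedSolution x y B a q) : y ^ 2 ∣ x ^ 3 + C a * x + B :=
  h.equation ▸ dvd_mul_left _ _

theorem dvd_derivative (h : NormalizedSolution x y B a q) :
    y ∣ (3 * x ^ 2 + C a) * derivative x + derivative B := by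
  convert pow_sub_one_dvd_derivative_of_pow_dvd h.sq_dvd using 1
  · rw [pow_one]
  · simp only [derivative_add, derivative_C_mul, derivative_pow, Nat.cast_ofNat, map_ofNat]
    ring

variable {σ : K[X]}

theorem cubic_eq (h : NormalizedSolution x y (C (2 * a) * σ) a q) :
    x ^ 3 + C a * (x + 2 * σ) = (X ^ 2 - 2 * C q) * y ^ 2 := by
  rw [← h.equation, C_mul, C_ofNat]
  ring

theorem dvd_derivative_cubic (h : NormalizedSolution x y (C (2 * a) * σ) a q) :
    y ∣ (3 * x ^ 2 + C a) * derivative x + 2 * C a * derivative σ := by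
  have hdvd := h.dvd_derivative
  rwa [derivative_C_mul, C_mul, C_ofNat] at hdvd

variable [CharZero K]

theorem derivative_x_ne_zero (h : NormalizedSolution x y B a q) : derivative x ≠ 0 :=
  derivative_ne_zero.mpr (by rw [h.monic_x.natDegree_eq]; norm_num)

theorem a_ne_zero (h : NormalizedSolution x y B a q) : a ≠ 0 := by
  rintro rfl
  have hres : 3 * B * derivative x = derivative B * x := by
    have hdvd : y ∣ 3 * B * derivative x - derivative B * x := by
      convert ((dvd_of_mul_left_dvd (sq y ▸ h.sq_dvd)).mul_left (3 * derivative x)).sub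
        (h.dvd_derivative.mul_left x) using 1
      rw [C_0]
      ring
    refine sub_eq_zero.mp (eq_zero_of_dvd_of_natDegree_lt hdvd ?_)
    have := h.natDegree_B
    have := h.monic_x.natDegree_eq
    have := natDegree_derivative_le x
    have := natDegree_derivative_le B
    rw [h.monic_y.natDegree_eq]
    compute_degree
    omega
  obtain ⟨b, c, rfl⟩ := exists_eq_X_add_C_of_natDegree_le_one h.natDegree_B
  have hb : b = 0 := by
    have hx₄ : x.coeff 4 = 1 := ((isMonicOfDegree_iff ..).mp h.monic_x).2
    have hx₅ : x.coeff 5 = 0 := coeff_eq_zero_of_natDegree_lt (by simp [h.monic_x.natDegree_eq])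
    have hcoeff : 3 * (b * (3 + 1)) = b := by
      simpa [mul_assoc, add_mul, coeff_derivative, hx₄, hx₅] using congrArg (coeff · 4) hres
    linear_combination hcoeff / 11
  have hc : c = 0 := by simpa [hb, h.derivative_x_ne_zero] using hres
  exact h.nondegenerate (by simp [hb, hc])

theorem exists_B_eq (h : NormalizedSolution x y B a q) : ∃ σ : K[X], B = C (2 * a) * σ :=
  (isUnit_C.mpr (mul_ne_zero two_ne_zero h.a_ne_zero).isUnit).dvd

theorem dvd_linearResidue (h : NormalizedSolution x y (C (2 * a) * σ) a q) :
    y ∣ linearResidue σ (derivative σ) x (derivative x) := by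
  have h2a : IsUnit (C (2 * a)) := isUnit_C.mpr (mul_ne_zero two_ne_zero h.a_ne_zero).isUnit
  rw [← h2a.dvd_mul_left, C_mul, C_ofNat]
  refine dvd_mul_linearResidue ?_ h.dvd_derivative_cubic
  exact h.cubic_eq ▸ (dvd_pow_self y two_ne_zero).mul_left _

theorem sq_dvd_quadraticResidue (h : NormalizedSolution x y (C (2 * a) * σ) a q) :
    y ^ 2 ∣ quadraticResidue (C a) σ (derivative σ) x (derivative x) := by
  have h4a : IsUnit (C (4 * a ^ 2)) :=
    isUnit_C.mpr (mul_ne_zero (by norm_num) (pow_ne_zero 2 h.a_ne_zero)).isUnit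
  rw [← h4a.dvd_mul_left, C_mul, C_ofNat, C_pow]
  exact sq_dvd_mul_quadraticResidue (h.cubic_eq ▸ dvd_mul_left _ _) h.dvd_derivative_cubic

theorem natDegree_σ (h : NormalizedSolution x y (C (2 * a) * σ) a q) : σ.natDegree = 1 := by
  have h2a : 2 * a ≠ 0 := mul_ne_zero two_ne_zero h.a_ne_zero
  have hle : σ.natDegree ≤ 1 := natDegree_C_mul h2a ▸ h.natDegree_B
  refine hle.antisymm (Nat.one_le_iff_ne_zero.mpr fun hσ => ?_)
  obtain ⟨c, rfl⟩ := natDegree_eq_zero.mp hσ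
  have hdvd : y ^ 2 ∣ (C a + 27 * C c ^ 2) * derivative x ^ 2 := by
    simpa [quadraticResidue] using h.sq_dvd_quadraticResidue
  have hres : (C a + 27 * C c ^ 2) * derivative x ^ 2 = 0 := by
    refine eq_zero_of_dvd_of_natDegree_lt hdvd ?_
    have := h.monic_x.natDegree_eq
    have := natDegree_derivative_le x
    rw [h.monic_y.monic.natDegree_pow, h.monic_y.natDegree_eq]
    compute_degree
    omega
  refine h.nondegenerate ?_
  have := (mul_eq_zero.mp hres).resolve_right (pow_ne_zero 2 h.derivative_x_ne_zero)
  rw [C_mul, C_ofNat]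
  linear_combination 4 * C a ^ 2 * this

theorem exists_linearResidue_eq (h : NormalizedSolution x y (C (2 * a) * σ) a q) :
    ∃ v : K[X], IsMonicOfDegree v 2 ∧
      linearResidue σ (derivative σ) x (derivative x) = 4 * (y * v) := by
  refine exists_isMonicOfDegree_eq_C_mul_mul (c := 4) h.monic_y h.dvd_linearResidue ?_ ?_
    (by norm_num)
  all_goals
    obtain ⟨k, -, e, rfl⟩ := natDegree_eq_one.mp h.natDegree_σ
    obtain ⟨c₃, c₂, c₁, c₀, rfl⟩ := exists_eq_quartic_of_isMonicOfDegree h.monic_x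
    simp only [linearResidue, derivative_add, derivative_C_mul, derivative_X_pow, derivative_C,
      derivative_X]
    compute_degree!

theorem exists_quadraticResidue_eq (h : NormalizedSolution x y (C (2 * a) * σ) a q) :
    ∃ m : K[X], IsMonicOfDegree m 1 ∧
      quadraticResidue (C a) σ (derivative σ) x (derivative x) =
        24 * derivative σ * (y ^ 2 * m) := by
  have hdvd := h.sq_dvd_quadraticResidue
  have hσ := h.natDegree_σ
  obtain ⟨k, hk, e, rfl⟩ := natDegree_eq_one.mp hσ
  have hderiv : derivative (C k * X + C e) = C k := by simp
  have h24 : 24 * C k = C (24 * k) := by rw [C_mul, C_ofNat]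
  rw [hderiv] at hdvd ⊢
  rw [h24]
  exact exists_isMonicOfDegree_eq_C_mul_mul (h.monic_y.pow 2) hdvd
    (natDegree_quadraticResidue_le h.monic_x.natDegree_eq.le hσ.le)
    (coeff_quadraticResidue h.monic_x hσ.le) (mul_ne_zero (by norm_num) hk)

theorem exists_reducedSolution (h : NormalizedSolution x y (C (2 * a) * σ) a q) :
    ∃ v m : K[X], ReducedSolution x σ v m a q := by
  obtain ⟨v, hv, hlin⟩ := h.exists_linearResidue_eq
  obtain ⟨m, hm, hquad⟩ := h.exists_quadraticResidue_eq
  have hy : y ^ 2 ≠ 0 := pow_ne_zero 2 h.monic_y.ne_zero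
  have hcubic := linearResidue_sq_mul_add_quadraticResidue_mul (C a) σ (derivative σ) x
    (derivative x)
  have hdiscr := mul_linearResidue_sq_sub_quadraticResidue_mul (C a) σ (derivative σ) x
    (derivative x)
  rw [hlin, hquad, h.cubic_eq] at hcubic hdiscr
  refine ⟨v, m, h.monic_x, h.natDegree_σ, hv, hm, mul_left_cancel₀ hy ?_, mul_left_cancel₀ hy ?_⟩
  · linear_combination hcubic
  · linear_combination hdiscr

theorem exists_parameter (h : NormalizedSolution x y B a q) :
    ∃ n : K, n ≠ 0 ∧ q = -4 * n ^ 2 ∧ a = 3464208 * n ^ 8 ∧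
      B = C (272097792 * n ^ 11) * X + C (-2108757888 * n ^ 12) ∧
      x = X ^ 4 + C (-20 * n) * X ^ 3 + C (216 * n ^ 2) * X ^ 2 + C (-808 * n ^ 3) * X
        + C (1340 * n ^ 4) ∧
      y = X ^ 5 + C (-30 * n) * X ^ 4 + C (470 * n ^ 2) * X ^ 3 + C (-3832 * n ^ 3) * X ^ 2
        + C (17304 * n ^ 4) * X + C (-24848 * n ^ 5) := by
  obtain ⟨σ, rfl⟩ := h.exists_B_eq
  obtain ⟨v, m, hred⟩ := h.exists_reducedSolution
  obtain ⟨n, hn, rfl, rfl, rfl, rfl⟩ := hred.exists_parameter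
  have hB : C (2 * (3464208 * n ^ 8)) * (C (432 / 11 * n ^ 3) * X + C (-3348 / 11 * n ^ 4)) =
      C (272097792 * n ^ 11) * X + C (-2108757888 * n ^ 12) := by
    rw [mul_add, ← mul_assoc, ← C_mul, ← C_mul]
    ring_nf
  refine ⟨n, hn, rfl, rfl, hB, rfl, ?_⟩
  have hQ : (X ^ 2 - 2 * C (-4 * n ^ 2) : K[X]) ≠ 0 :=
    (isMonicOfDegree_X_sq_sub _).ne_zero
  have hsq : y ^ 2 = (X ^ 5 + C (-30 * n) * X ^ 4 + C (470 * n ^ 2) * X ^ 3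
      + C (-3832 * n ^ 3) * X ^ 2 + C (17304 * n ^ 4) * X + C (-24848 * n ^ 5)) ^ 2 := by
    refine mul_left_cancel₀ hQ (h.equation.symm.trans ?_)
    rw [hB]
    simp only [C_mul, C_pow, C_neg, C_ofNat]
    ring
  have hy₀ : IsMonicOfDegree (X ^ 5 + C (-30 * n) * X ^ 4 + C (470 * n ^ 2) * X ^ 3
      + C (-3832 * n ^ 3) * X ^ 2 + C (17304 * n ^ 4) * X + C (-24848 * n ^ 5)) 5 := by
    rw [isMonicOfDegree_iff]
    exact ⟨by compute_degree, by compute_degree!⟩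
  refine (sq_eq_sq_iff_eq_or_eq_neg.mp hsq).resolve_right fun hneg => ?_
  have hlead := h.monic_y.leadingCoeff_eq
  rw [hneg, leadingCoeff_neg, hy₀.leadingCoeff_eq] at hlead
  norm_num at hlead

theorem exists_eq_elkies (h : NormalizedSolution x y B a q) : ∃ l : K, l ≠ 0 ∧
    x = C (324 * l ^ 4)⁻¹ * (elkiesX K).comp (C l * X + C (5 / 9)) ∧
    a = 33 * (324 * l ^ 4)⁻¹ ^ 2 ∧
    B = C ((324 * l ^ 4)⁻¹ ^ 3) * (elkiesB K).comp (C l * X + C (5 / 9)) ∧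
    X ^ 2 - 2 * C q = C (9 * l ^ 2)⁻¹ * (elkiesQ K).comp (C l * X + C (5 / 9)) ∧
    y = C (1944 * l ^ 5)⁻¹ * (elkiesY K).comp (C l * X + C (5 / 9)) := by
  obtain ⟨n, hn, rfl, rfl, rfl, rfl, rfl⟩ := h.exists_parameter
  refine ⟨-(18 * n)⁻¹, neg_ne_zero.mpr (inv_ne_zero (mul_ne_zero (by norm_num) hn)), ?_, ?_, ?_,
    ?_, ?_⟩
  case refine_2 =>
    field_simp
    ring
  all_goals
    refine Polynomial.funext fun t => ?_
    simp only [elkiesX, elkiesB, elkiesQ, elkiesY, eval_add, eval_sub, eval_neg, eval_mul, eval_pow,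
      eval_comp, eval_X, eval_C, eval_ofNat, eval_one]
    field_simp
    ring

end NormalizedSolution

/-! ### Arbitrary solutions -/

namespace ElkiesPellZagierSolution

variable {Xp Yp Qp A B : K[X]} [CharZero K]

theorem exists_normalizedSolution (h : ElkiesPellZagierSolution Xp Yp Qp A B) :
    ∃ (α η r a q : K) (x y B₁ : K[X]), α ≠ 0 ∧ η ≠ 0 ∧ NormalizedSolution x y B₁ a q ∧
      Xp = C α * taylor r x ∧ A = C (α ^ 2 * a) ∧ B = C (α ^ 3) * taylor r B₁ ∧
      Qp = C (α ^ 3 * (η ^ 2)⁻¹) * taylor r (X ^ 2 - 2 * C q) ∧ Yp = C η * taylor r y := by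
  obtain ⟨c, -, r, q, rfl⟩ := exists_eq_C_mul_taylor_sq_sub h.degree_Q
  obtain ⟨α, hα, x, hx, rfl⟩ := exists_isMonicOfDegree_eq_C_mul_taylor (n := 4) h.degree_X r
  obtain ⟨η, hη, y, hy, rfl⟩ := exists_isMonicOfDegree_eq_C_mul_taylor (n := 5) h.degree_Y r
  obtain ⟨B, rfl⟩ := exists_eq_C_mul_taylor (pow_ne_zero 3 hα) r B
  obtain ⟨a, rfl⟩ : ∃ a, A = C (α ^ 2 * a) := by
    refine ⟨A.coeff 0 / α ^ 2, ?_⟩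
    rw [mul_div_cancel₀ _ (pow_ne_zero 2 hα)]
    exact eq_C_of_degree_le_zero h.degree_A
  have hB : B.natDegree ≤ 1 := by
    have hdeg := natDegree_le_of_degree_le h.degree_B
    rwa [natDegree_C_mul (pow_ne_zero 3 hα), natDegree_taylor] at hdeg
  have hscaled : C (α ^ 3) * (x ^ 3 + C a * x + B) =
      C (c * η ^ 2) * ((X ^ 2 - 2 * C q) * y ^ 2) := by
    refine taylor_injective r ?_
    have heq := h.equation
    simp only [taylor_mul, taylor_pow, taylor_C, map_add, C_mul, C_pow] at heq ⊢
    linear_combination heq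
  have hcubic : IsMonicOfDegree (x ^ 3 + C a * x + B) 12 := by
    have := hx.natDegree_eq
    rw [add_assoc]
    exact (hx.pow 3).add_right (by compute_degree; omega)
  obtain ⟨hc, hequation⟩ := eq_and_eq_of_C_mul_eq_C_mul (pow_ne_zero 3 hα) hcubic
    ((isMonicOfDegree_X_sq_sub q).mul (hy.pow 2)) hscaled
  refine ⟨α, η, r, a, q, x, y, B, hα, hη, ⟨hx, hy, hB, hequation, fun hzero => ?_⟩, rfl, rfl, rfl,
    ?_, rfl⟩
  · refine h.nondegenerate ?_
    have hzero' := congrArg (taylor r) hzero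
    simp only [← C_ofNat, taylor_mul, taylor_pow, taylor_C, map_add, map_zero] at hzero'
    simp only [C_mul, C_pow, C_ofNat] at hzero' ⊢
    linear_combination C α ^ 6 * hzero'
  · rw [hc, mul_inv_cancel_right₀ (pow_ne_zero 2 hη)]

theorem exists_eq_elkies (h : ElkiesPellZagierSolution Xp Yp Qp A B) :
    ∃ l α η μ : K, l ≠ 0 ∧ α ≠ 0 ∧ η ≠ 0 ∧
      Xp = C α * (elkiesX K).comp (C l * X + C μ) ∧
      A = C (33 * α ^ 2) ∧
      B = C (α ^ 3) * (elkiesB K).comp (C l * X + C μ) ∧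
      Qp = C (α ^ 3 * (η ^ 2)⁻¹) * (elkiesQ K).comp (C l * X + C μ) ∧
      Yp = C η * (elkiesY K).comp (C l * X + C μ) := by
  obtain ⟨α, η, r, a, q, x, y, B, hα, hη, hnorm, rfl, rfl, rfl, rfl, rfl⟩ :=
    h.exists_normalizedSolution
  obtain ⟨l, hl, hx, ha, hB, hQ, hy⟩ := hnorm.exists_eq_elkies
  have hscale : α ^ 3 * (η ^ 2)⁻¹ * (9 * l ^ 2)⁻¹ =
      (α * (324 * l ^ 4)⁻¹) ^ 3 * ((η * (1944 * l ^ 5)⁻¹) ^ 2)⁻¹ := by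
    field_simp
    norm_num
  refine ⟨l, α * (324 * l ^ 4)⁻¹, η * (1944 * l ^ 5)⁻¹, l * r + 5 / 9, hl, ?_, ?_, ?_, ?_, ?_, ?_,
    ?_⟩
  · simp [hα, hl]
  · simp [hη, hl]
  · rw [hx, taylor_mul, taylor_C, taylor_comp_linear, ← mul_assoc, ← C_mul]
  · rw [ha, mul_pow, mul_left_comm]
  · rw [hB, taylor_mul, taylor_C, taylor_comp_linear, ← mul_assoc, ← C_mul, mul_pow]
  · rw [hQ, taylor_mul, taylor_C, taylor_comp_linear, ← mul_assoc, ← C_mul, hscale]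
  · rw [hy, taylor_mul, taylor_C, taylor_comp_linear, ← mul_assoc, ← C_mul]

end ElkiesPellZagierSolution

theorem leadingCoeff_elkiesX_comp [CharZero K] {l : K} (hl : l ≠ 0) (μ : K) :
    ((elkiesX K).comp (C l * X + C μ)).leadingCoeff = (18 * l ^ 2) ^ 2 := by
  have hdeg : (elkiesX K).natDegree = 4 := by
    rw [elkiesX]
    compute_degree!
  have hcoeff : (elkiesX K).coeff 4 = 324 := by
    rw [elkiesX]
    compute_degree!
  rw [leadingCoeff_comp (by rw [natDegree_linear hl]; exact one_ne_zero), leadingCoeff_linear hl,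
    leadingCoeff, hdeg, hcoeff]
  ring

theorem elkies_first_case_uniqueness_general [CharZero K] {Xp Yp Qp A B : K[X]}
    (h : ElkiesPellZagierSolution Xp Yp Qp A B) (hsq : IsSquare Xp.leadingCoeff) :
    ∃ l u v μ : K, l ≠ 0 ∧ u ≠ 0 ∧ v ≠ 0 ∧
      Xp = C (u ^ 2) * (elkiesX K).comp (C l * X + C μ) ∧
      A = C (33 * u ^ 4) ∧
      B = C (u ^ 6) * (elkiesB K).comp (C l * X + C μ) ∧
      Qp = C (v ^ 2) * (elkiesQ K).comp (C l * X + C μ) ∧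
      Yp = C (u ^ 3 * v⁻¹) * (elkiesY K).comp (C l * X + C μ) := by
  obtain ⟨l, α, η, μ, hl, hα, hη, hX, hA, hB, hQ, hY⟩ := h.exists_eq_elkies
  obtain ⟨u, rfl⟩ : ∃ u, α = u ^ 2 := by
    obtain ⟨s, hs⟩ := hsq
    rw [hX, leadingCoeff_mul, leadingCoeff_C, leadingCoeff_elkiesX_comp hl] at hs
    refine ⟨s / (18 * l ^ 2), ?_⟩
    field_simp
    linear_combination hs
  have hu : u ≠ 0 := ne_zero_pow two_ne_zero hα
  have hv : (u ^ 2) ^ 3 * (η ^ 2)⁻¹ = (u ^ 3 / η) ^ 2 := by ring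
  have hη' : η = u ^ 3 * (u ^ 3 / η)⁻¹ := by field_simp
  refine ⟨l, u, u ^ 3 / η, μ, hl, hu, div_ne_zero (pow_ne_zero 3 hu) hη, hX, ?_, ?_, hv ▸ hQ,
    hη' ▸ hY⟩
  · rw [hA]
    ring_nf
  · rw [hB]
    ring_nf

/-- Uniqueness of the Elkies solution: any nondegenerate solution in `ℂ[t]` of
`X³ + A·X + B = Q·Y²` with `deg X = 4`, `deg Y = 5`, `deg Q = 2`, `A` constant,
`deg B ≤ 1` is obtained from the Elkies solution
`X₀ = 324t⁴ - 360t³ + 216t² - 84t + 15`, `A₀ = 33`, `B₀ = -18(8t - 1)`,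
`Q₀ = 9t² - 10t + 3`, `Y₀ = 36(54t⁵ - 60t⁴ + 45t³ - 21t² + 6t - 1)` by the
rescaling `t ↦ λt + μ`, `(X, A, B, Q, Y) ↦ (u²X₀, 33u⁴, u⁶B₀, v²Q₀, u³v⁻¹Y₀)`. -/
theorem elkies_first_case_uniqueness
    (Xp Yp Qp A B : ℂ[X])
    (hXdeg : Xp.degree = 4) (hYdeg : Yp.degree = 5) (hQdeg : Qp.degree = 2)
    (hAconst : A.degree ≤ 0) (hBdeg : B.degree ≤ 1)
    (heq : Xp ^ 3 + A * Xp + B = Qp * Yp ^ 2)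
    (hnondeg : 4 * A ^ 3 + 27 * B ^ 2 ≠ 0) :
    ∃ l u v μ : ℂ, l ≠ 0 ∧ u ≠ 0 ∧ v ≠ 0 ∧
      Xp = C (u ^ 2) *
          (324 * X ^ 4 - 360 * X ^ 3 + 216 * X ^ 2 - 84 * X + 15 : ℂ[X]).comp
            (C l * X + C μ) ∧
      A = C (33 * u ^ 4) ∧
      B = C (u ^ 6) * (-18 * (8 * X - 1) : ℂ[X]).comp (C l * X + C μ) ∧
      Qp = C (v ^ 2) * (9 * X ^ 2 - 10 * X + 3 : ℂ[X]).comp (C l * X + C μ) ∧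
      Yp = C (u ^ 3 * v⁻¹) *
          (36 * (54 * X ^ 5 - 60 * X ^ 4 + 45 * X ^ 3 - 21 * X ^ 2 + 6 * X - 1) :
            ℂ[X]).comp (C l * X + C μ) :=
  elkies_first_case_uniqueness_general ⟨hXdeg, hYdeg, hQdeg, hAconst, hBdeg, heq, hnondeg⟩
    (IsAlgClosed.exists_eq_mul_self _)
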